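/- Let N be a positive integer and M₁ ∈ SL₂(ℤ) with bottom row (c₁, d₁). Then there exists M₂ ∈ SL₂(ℤ) whose lower-left entry equals gcd(d₁, N) and such that M₂·S·M₁⁻¹ ∈ Γ₀(N). -/

import Mathlib

open Matrix CongruenceSubgroup
open scoped MatrixGroups

/-!
The coset `Γ₀(N) * M` is determined by the bottom row `(c, d)` of `M` modulo `N`, up to a common
factor `u` prime to `N`. Such a `u` can be chosen with `u * c ≡ gcd(c, N)`, and then
`(gcd(c, N), u * d)` is the bottom row of a matrix in this coset. The theorem is the case
`M = M₁ * S⁻¹`, whose bottom row is `(-d₁, c₁)`.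
-/

theorem exists_isCoprime_mul_modEq_gcd (a : ℤ) (N : ℕ) :
    ∃ u : ℤ, IsCoprime u N ∧ u * a ≡ Int.gcd a N [ZMOD N] := by
  obtain ⟨e, heN, _, ⟨w, rfl⟩, ha⟩ := ZMod.eq_unit_mul_divisor (a : ZMod N)
  obtain ⟨u, hu⟩ := ZMod.intCast_surjective (↑w⁻¹ : ZMod N)
  have hu_coprime : IsCoprime u N :=
    ((ZMod.coe_int_isUnit_iff_isCoprime u N).mp (hu ▸ w⁻¹.isUnit)).symm
  have hua : u * a ≡ e [ZMOD N] := by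
    rw [← ZMod.intCast_eq_intCast_iff]
    push_cast
    rw [hu, ha, Units.inv_mul_cancel_left]
  have hgcd : Int.gcd a N = e :=
    calc Int.gcd a N = Int.gcd (u * a) N :=
          (Int.gcd_mul_right_left_of_gcd_eq_one (Int.isCoprime_iff_gcd_eq_one.mp hu_coprime)).symm
      _ = Int.gcd e N := by rw [← Int.gcd_emod, hua, Int.gcd_emod]
      _ = e := by rw [Int.gcd_natCast_natCast, Nat.gcd_eq_left heN]
  exact ⟨u, hu_coprime, hgcd ▸ hua⟩

theorem mul_inv_apply_one_zero {R : Type*} [CommRing R] (A B : SL(2, R)) :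
    (A * B⁻¹) 1 0 = A 1 0 * B 1 1 - A 1 1 * B 1 0 := by
  simp [adjugate_fin_two, mul_apply, sub_eq_add_neg]

theorem mul_inv_mem_Gamma0_iff {N : ℕ} {A B : SL(2, ℤ)} :
    A * B⁻¹ ∈ Gamma0 N ↔ A 1 0 * B 1 1 ≡ A 1 1 * B 1 0 [ZMOD N] := by
  rw [Gamma0_mem, mul_inv_apply_one_zero, Int.cast_sub, sub_eq_zero, ZMod.intCast_eq_intCast_iff]

theorem exists_mem_Gamma0_mul_lower_left_eq_gcd (N : ℕ) (M : SL(2, ℤ)) :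
    ∃ γ ∈ Gamma0 N, (γ * M) 1 0 = Int.gcd (M 1 0) N := by
  obtain ⟨u, hu_coprime, hu⟩ := exists_isCoprime_mul_modEq_gcd (M 1 0) N
  have hrow : IsCoprime (Int.gcd (M 1 0) N : ℤ) (u * M 1 1) :=
    (hu_coprime.symm.of_isCoprime_of_dvd_left (Int.gcd_dvd_right ..)).mul_right
      ((M.isCoprime_row 1).of_isCoprime_of_dvd_left (Int.gcd_dvd_left ..))
  obtain ⟨A, hA₀, hA₁⟩ := hrow.exists_SL2_row 1
  refine ⟨A * M⁻¹, mul_inv_mem_Gamma0_iff.mpr ?_, by rw [inv_mul_cancel_right, hA₀]⟩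
  calc A 1 0 * M 1 1 = Int.gcd (M 1 0) N * M 1 1 := by rw [hA₀]
    _ ≡ u * M 1 0 * M 1 1 [ZMOD N] := hu.symm.mul_right _
    _ = A 1 1 * M 1 0 := by rw [hA₁]; ring

/-- For any `M₁ ∈ SL₂(ℤ)` with bottom row `(c₁, d₁)`, there is `M₂ ∈ SL₂(ℤ)` whose
lower-left entry is `gcd(d₁, N)` and with `M₂·S·M₁⁻¹ ∈ Γ₀(N)`. -/
theorem exists_rep_adjacent_cusp (N : ℕ) (hN : 0 < N) (M₁ : SL(2, ℤ)) :
    ∃ M₂ : SL(2, ℤ),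
      (M₂ : Matrix (Fin 2) (Fin 2) ℤ) 1 0 =
        (Int.gcd ((M₁ : Matrix (Fin 2) (Fin 2) ℤ) 1 1) (N : ℤ) : ℤ) ∧
      M₂ * ModularGroup.S * M₁⁻¹ ∈ Gamma0 N := by
  obtain ⟨γ, hγ, hgcd⟩ := exists_mem_Gamma0_mul_lower_left_eq_gcd N (M₁ * ModularGroup.S⁻¹)
  have hentry : (M₁ * ModularGroup.S⁻¹) 1 0 = -M₁ 1 1 := by
    simp [mul_inv_apply_one_zero, ModularGroup.coe_S]
  refine ⟨γ * (M₁ * ModularGroup.S⁻¹), ?_, ?_⟩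
  · rw [hgcd, hentry, Int.neg_gcd]
  · rwa [← mul_assoc, inv_mul_cancel_right, mul_inv_cancel_right]
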